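/- The T-count of any single-qubit unitary U in the group generated by H and T equals sde(Û), the smallest denominator exponent of its channel representation Û. In particular, the T-count of the T gate itself is 1, and sde(T̂) = 1. -/

import Mathlib

/-!
Every element of `⟨H, T⟩` is, up to a phase, a Clifford or a Matsumoto–Amano normal form
`L₀ T L₁ T ⋯ Lₙ T C` with `L₀ ∈ {1, H, SH}`, `Lᵢ ∈ {H, SH}` for `i ≥ 1`, and `C` a Clifford
(`MemJ1.exists_MA`): the gates `S` and `X` preserve the `Z` axis and can be pushed to the right
through `T`, and `T T = S` is absorbed when two letters `T` meet.

The channel representation sends `H` and `S` to signed permutations of the Paulis, and `√2 T̂` has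
entries in `ℤ[√2]`. Hence a word with `m` letters `T` has denominators dividing `√2 ^ m`
(`IsWord.exists_isNum`), so that the denominator exponent is a lower bound for the T-count.

For a normal form with `k ≥ 1` letters `T`, of which the leftmost letter is one, the numerators
over `√2 ^ k`, taken modulo `√2`, have equal nonzero rows `X` and `Y` and zero row `Z`
(`NF.exists_isNum`). Applying `H` or `SH` moves the zero row to `X` or `Y`, and a further `T`,
which replaces rows `X` and `Y` by their difference and sum, restores the pattern with `k + 1` in
place of `k`. So the exponent is exactly the number of letters `T` of the normal form, and that
number is both the T-count and the `sde`.
-/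

open Matrix

/-- Smallest denominator exponent in `ℤ[1/√2]`. -/
noncomputable def sde (v : ℝ) : ℕ :=
  sInf {k : ℕ | ∃ a b : ℤ, v = (a + b * Real.sqrt 2) / (Real.sqrt 2) ^ k}

noncomputable def Hgate : Matrix (Fin 2) (Fin 2) ℂ :=
  ((Real.sqrt 2 : ℂ))⁻¹ • !![1, 1; 1, -1]

noncomputable def Tgate : Matrix (Fin 2) (Fin 2) ℂ :=
  !![1, 0; 0, Complex.exp (Complex.I * (Real.pi / 4))]

noncomputable def Sgate : Matrix (Fin 2) (Fin 2) ℂ := Tgate ^ 2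

/-- Single-qubit Cliffords: words in `H` and `S = T²`. -/
def IsClifford1 (C : Matrix (Fin 2) (Fin 2) ℂ) : Prop :=
  ∃ L : List (Matrix (Fin 2) (Fin 2) ℂ),
    (∀ A ∈ L, A = Hgate ∨ A = Sgate) ∧ C = L.prod

/-- Membership in `J₁ = ⟨H, T⟩`. -/
def MemJ1 (U : Matrix (Fin 2) (Fin 2) ℂ) : Prop :=
  ∃ L : List (Matrix (Fin 2) (Fin 2) ℂ),
    (∀ A ∈ L, A = Hgate ∨ A = Tgate) ∧ U = L.prod

/-- The T-count: the least `m` with `e^{iφ}U = C_m T C_{m-1} ⋯ T C₀`. -/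
noncomputable def Tcount (U : Matrix (Fin 2) (Fin 2) ℂ) : ℕ :=
  sInf {m : ℕ | ∃ (φ : ℝ) (C : Fin (m + 1) → Matrix (Fin 2) (Fin 2) ℂ),
    (∀ i, IsClifford1 (C i)) ∧
    Complex.exp (Complex.I * φ) • U =
      ((List.ofFn fun i : Fin m => C i.succ * Tgate).reverse).prod * C 0}

noncomputable def pauli1 : Fin 4 → Matrix (Fin 2) (Fin 2) ℂ
  | 0 => 1
  | 1 => !![0, 1; 1, 0]
  | 2 => !![0, -Complex.I; Complex.I, 0]
  | 3 => !![1, 0; 0, -1]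

/-- The channel representation of a single-qubit unitary, `Û_{rs} = ½Tr(P_r U P_s U†)`. -/
noncomputable def chan1 (U : Matrix (Fin 2) (Fin 2) ℂ) : Matrix (Fin 4) (Fin 4) ℝ :=
  fun r s => ((2 : ℂ)⁻¹ * (pauli1 r * U * pauli1 s * Uᴴ).trace).re

/-- `sde` of a matrix: the maximum `sde` of its entries. -/
noncomputable def sdeMat (M : Matrix (Fin 4) (Fin 4) ℝ) : ℕ :=
  Finset.univ.sup fun p : Fin 4 × Fin 4 => sde (M p.1 p.2)

/-- The qubit gates and unitaries live among the complex `2 × 2` matrices. -/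
abbrev Mat2 := Matrix (Fin 2) (Fin 2) ℂ

/-! ### Gate identities -/

/-- The Pauli gate `X`. -/
noncomputable def Xgate : Mat2 := !![0, 1; 1, 0]

/-- The primitive eighth root of unity `e^{iπ/4}`. -/
noncomputable def omega8 : ℂ := Complex.exp (Complex.I * (Real.pi / 4))

lemma norm_omega8 : ‖omega8‖ = 1 := by
  have : omega8 = Complex.exp (((Real.pi / 4 : ℝ) : ℂ) * Complex.I) := by
    unfold omega8; push_cast; ring_nf
  rw [this, Complex.norm_exp_ofReal_mul_I]

lemma omega8_sq : omega8 * omega8 = Complex.I := by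
  have : omega8 * omega8 = Complex.exp (Real.pi / 2 * Complex.I) := by
    unfold omega8
    rw [← Complex.exp_add]
    ring_nf
  rw [this, Complex.exp_pi_div_two_mul_I]

/-- The complex number `1/√2`. -/
noncomputable def hh : ℂ := ((Real.sqrt 2 : ℂ))⁻¹

lemma hh_sq : hh * hh = 1 / 2 := by
  unfold hh
  rw [← mul_inv, ← Complex.ofReal_mul, Real.mul_self_sqrt (by norm_num)]
  norm_num

lemma omega8_eq : omega8 = hh * (1 + Complex.I) := by
  have : omega8 = Complex.exp (((Real.pi / 4 : ℝ) : ℂ) * Complex.I) := by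
    unfold omega8; push_cast; ring_nf
  rw [this, Complex.exp_mul_I, ← Complex.ofReal_cos, ← Complex.ofReal_sin,
    Real.cos_pi_div_four, Real.sin_pi_div_four]
  have h2 : hh = ((Real.sqrt 2 / 2 : ℝ) : ℂ) := by
    unfold hh
    rw [← Complex.ofReal_inv]
    congr 1
    rw [← Real.sqrt_div_self]
  rw [h2]; ring

lemma star_hh : (starRingEnd ℂ) hh = hh := by
  unfold hh; simp

lemma star_omega8 : (starRingEnd ℂ) omega8 = hh * (1 - Complex.I) := by
  rw [omega8_eq, map_mul, star_hh]; simp [sub_eq_add_neg]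

lemma Tgate_eq : Tgate = !![1, 0; 0, omega8] := rfl

lemma Sgate_eq : Sgate = !![1, 0; 0, Complex.I] := by
  simp [Sgate, pow_two, Tgate_eq, omega8_sq]

lemma Hgate_eq : Hgate = !![hh, hh; hh, -hh] := by
  ext i j; fin_cases i <;> fin_cases j <;> simp [Hgate, hh]

lemma T_T (U : Mat2) : Tgate * (Tgate * U) = Sgate * U := by
  rw [Sgate, pow_two, Matrix.mul_assoc]

lemma S_T (U : Mat2) : Sgate * (Tgate * U) = Tgate * (Sgate * U) := by
  simp only [← Matrix.mul_assoc, Sgate, pow_two]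

lemma H_H (U : Mat2) : Hgate * (Hgate * U) = U := by
  have : Hgate * Hgate = 1 := by
    rw [Hgate_eq]
    ext i j; fin_cases i <;> fin_cases j <;> simp [hh_sq] <;> norm_num
  rw [← Matrix.mul_assoc, this, Matrix.one_mul]

lemma S_S_H (U : Mat2) : Sgate * (Sgate * (Hgate * U)) = Hgate * (Xgate * U) := by
  have : Sgate * Sgate * Hgate = Hgate * Xgate := by
    rw [Hgate_eq, Sgate_eq, Xgate]
    ext i j; fin_cases i <;> fin_cases j <;> simp
  simp only [← Matrix.mul_assoc, this]

lemma X_H (U : Mat2) : Xgate * (Hgate * U) = Hgate * (Sgate * (Sgate * U)) := by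
  have : Xgate * Hgate = Hgate * Sgate * Sgate := by
    rw [Hgate_eq, Sgate_eq, Xgate]
    ext i j; fin_cases i <;> fin_cases j <;> simp [mul_assoc]
  simp only [← Matrix.mul_assoc, this]

lemma S_four (U : Mat2) : Sgate * (Sgate * (Sgate * (Sgate * U))) = U := by
  have : Sgate * Sgate * Sgate * Sgate = 1 := by
    rw [Sgate_eq]
    ext i j; fin_cases i <;> fin_cases j <;> simp
  simp only [← Matrix.mul_assoc, this, Matrix.one_mul]

lemma X_S (U : Mat2) :
    Xgate * (Sgate * U) = Complex.I • (Sgate * (Sgate * (Sgate * (Xgate * U)))) := by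
  have : Xgate * Sgate = Complex.I • (Sgate * Sgate * Sgate * Xgate) := by
    rw [Sgate_eq, Xgate]
    ext i j; fin_cases i <;> fin_cases j <;> simp
  simp only [← Matrix.mul_assoc, this, Matrix.smul_mul]

lemma X_T (U : Mat2) :
    Xgate * (Tgate * U) = omega8 • (Tgate * (Sgate * (Sgate * (Sgate * (Xgate * U))))) := by
  have : Xgate * Tgate = omega8 • (Tgate * Sgate * Sgate * Sgate * Xgate) := by
    rw [Sgate_eq, Xgate, Tgate_eq]
    ext i j; fin_cases i <;> fin_cases j <;> simp
    linear_combination (-Complex.I ^ 3) * omega8_sq - (Complex.I ^ 2 - 1) * Complex.I_sq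
  simp only [← Matrix.mul_assoc, this, Matrix.smul_mul]

lemma H_S_H (U : Mat2) : Hgate * (Sgate * (Hgate * U)) =
    omega8 • (Sgate * (Sgate * (Sgate * (Hgate * (Sgate * (Sgate * (Sgate * U))))))) := by
  have : Hgate * Sgate * Hgate =
      omega8 • (Sgate * Sgate * Sgate * Hgate * Sgate * Sgate * Sgate) := by
    rw [Sgate_eq, Hgate_eq, omega8_eq]
    ext i j; fin_cases i <;> fin_cases j <;> simp <;> ring_nf <;> simp <;> ring
  simp only [← Matrix.mul_assoc, this, Matrix.smul_mul]

/-! ### Clifford words and normal forms -/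

lemma IsClifford1.one : IsClifford1 1 := ⟨[], by simp, by simp⟩

lemma IsClifford1.H_mul {C : Mat2} (h : IsClifford1 C) : IsClifford1 (Hgate * C) := by
  obtain ⟨L, hL, rfl⟩ := h
  refine ⟨Hgate :: L, ?_, by simp⟩
  intro A hA
  rcases List.mem_cons.1 hA with rfl | hA
  · exact Or.inl rfl
  · exact hL A hA

lemma IsClifford1.S_mul {C : Mat2} (h : IsClifford1 C) : IsClifford1 (Sgate * C) := by
  obtain ⟨L, hL, rfl⟩ := h
  refine ⟨Sgate :: L, ?_, by simp⟩
  intro A hA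
  rcases List.mem_cons.1 hA with rfl | hA
  · exact Or.inr rfl
  · exact hL A hA

lemma IsClifford1.X_mul {C : Mat2} (h : IsClifford1 C) : IsClifford1 (Xgate * C) := by
  have := h.H_mul.S_mul.S_mul.H_mul
  rwa [S_S_H, H_H] at this

/-- A property of `U` that is preserved by left multiplication by `H` and `S` is preserved by
left multiplication by every Clifford. -/
lemma IsClifford1.mul_induction {C : Mat2} (h : IsClifford1 C) {P : Mat2 → Prop}
    (hH : ∀ V, P V → P (Hgate * V)) (hS : ∀ V, P V → P (Sgate * V)) {U : Mat2} (hU : P U) :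
    P (C * U) := by
  obtain ⟨L, hL, rfl⟩ := h
  induction L with
  | nil => simpa using hU
  | cons A L ih =>
    have ih' := ih fun B hB => hL B (List.mem_cons_of_mem _ hB)
    rw [List.prod_cons, Matrix.mul_assoc]
    rcases hL A List.mem_cons_self with rfl | rfl
    · exact hH _ ih'
    · exact hS _ ih'

/-- `NF n U`: up to a phase, `U = T L₁ T L₂ T ⋯ Lₙ T C` with each `Lᵢ ∈ {H, SH}` and `C` a
Clifford. The word has `n + 1` letters `T`, the leftmost letter being `T`. -/
def NF : ℕ → Mat2 → Prop
  | 0, U => ∃ (c : ℂ) (C : Mat2), ‖c‖ = 1 ∧ IsClifford1 C ∧ U = c • (Tgate * C)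
  | n + 1, U => ∃ V, NF n V ∧ (U = Tgate * (Hgate * V) ∨ U = Tgate * (Sgate * (Hgate * V)))

lemma NF.smul {n : ℕ} {U : Mat2} (h : NF n U) {c : ℂ} (hc : ‖c‖ = 1) : NF n (c • U) := by
  induction n generalizing U with
  | zero =>
    obtain ⟨d, C, hd, hC, rfl⟩ := h
    exact ⟨c * d, C, by simp [hc, hd], hC, by rw [smul_smul]⟩
  | succ n ih =>
    obtain ⟨V, hV, h⟩ := h
    refine ⟨c • V, ih hV, ?_⟩
    rcases h with rfl | rfl
    · left; simp
    · right; simp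

/-- Normal forms starting with `T` absorb `S` and `X` on the left, because both gates
preserve the `Z` axis: they can be pushed through `T`, and then through the rest. -/
lemma NF.stab {n : ℕ} {U : Mat2} (h : NF n U) : NF n (Sgate * U) ∧ NF n (Xgate * U) := by
  induction n generalizing U with
  | zero =>
    obtain ⟨d, C, hd, hC, rfl⟩ := h
    refine ⟨⟨d, Sgate * C, hd, hC.S_mul, ?_⟩,
      ⟨d * omega8, _, by simp [hd, norm_omega8], hC.X_mul.S_mul.S_mul.S_mul, ?_⟩⟩
    · rw [Matrix.mul_smul, S_T]
    · rw [Matrix.mul_smul, X_T, smul_smul]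
  | succ n ih =>
    obtain ⟨V, hV, h⟩ := h
    have hX : ∀ {W}, NF n W → NF n (Xgate * W) := fun h => (ih h).2
    have hS : ∀ {W}, NF n W → NF n (Sgate * W) := fun h => (ih h).1
    have hI : ‖Complex.I‖ = 1 := by simp
    rcases h with rfl | rfl
    · refine ⟨⟨V, hV, Or.inr (S_T _)⟩, ?_⟩
      refine ⟨omega8 • (Xgate * (Sgate * (Sgate * V))), (hX (hS (hS hV))).smul norm_omega8,
        Or.inr ?_⟩
      rw [X_T, X_H, S_S_H]; simp
    · constructor
      · refine ⟨_, hX hV, Or.inl ?_⟩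
        rw [S_T, S_S_H]
      · refine ⟨omega8 • (Complex.I • (Xgate * (Sgate * (Sgate * V)))),
          ((hX (hS (hS hV))).smul hI).smul norm_omega8, Or.inl ?_⟩
        rw [X_T, X_S]
        simp only [Matrix.mul_smul, S_four]
        rw [X_H, S_S_H]

lemma NF.S_mul {n : ℕ} {U : Mat2} (h : NF n U) : NF n (Sgate * U) := h.stab.1

lemma NF.X_mul {n : ℕ} {U : Mat2} (h : NF n U) : NF n (Xgate * U) := h.stab.2

/-- Matsumoto–Amano normal forms with `m` letters `T`: phase times Clifford for `m = 0`, and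
otherwise `L · V` with `L ∈ {1, H, SH}` and `V` a normal form starting with `T`. -/
def MA (m : ℕ) (U : Mat2) : Prop :=
  (m = 0 ∧ ∃ (c : ℂ) (C : Mat2), ‖c‖ = 1 ∧ IsClifford1 C ∧ U = c • C) ∨
  ∃ n V, m = n + 1 ∧ NF n V ∧ (U = V ∨ U = Hgate * V ∨ U = Sgate * (Hgate * V))

lemma MA.H_mul {m : ℕ} {U : Mat2} (h : MA m U) : MA m (Hgate * U) := by
  rcases h with ⟨rfl, c, C, hc, hC, rfl⟩ | ⟨n, V, rfl, hV, rfl | rfl | rfl⟩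
  · exact Or.inl ⟨rfl, c, _, hc, hC.H_mul, by simp⟩
  · exact Or.inr ⟨n, _, rfl, hV, Or.inr (Or.inl rfl)⟩
  · exact Or.inr ⟨n, _, rfl, hV, Or.inl (H_H _)⟩
  · refine Or.inr ⟨n, omega8 • (Xgate * (Sgate * (Sgate * (Sgate * V)))), rfl,
      hV.S_mul.S_mul.S_mul.X_mul.smul norm_omega8, Or.inr (Or.inr ?_)⟩
    rw [H_S_H, S_S_H]; simp

lemma MA.T_mul {m : ℕ} {U : Mat2} (h : MA m U) : ∃ m', MA m' (Tgate * U) := by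
  rcases h with ⟨rfl, c, C, hc, hC, rfl⟩ | ⟨n, V, rfl, hV, rfl | rfl | rfl⟩
  · exact ⟨1, Or.inr ⟨0, _, rfl, ⟨c, C, hc, hC, rfl⟩, Or.inl (by simp)⟩⟩
  · cases n with
    | zero =>
      obtain ⟨d, C, hd, hC, rfl⟩ := hV
      exact ⟨0, Or.inl ⟨rfl, d, _, hd, hC.S_mul, by rw [Matrix.mul_smul, T_T]⟩⟩
    | succ n =>
      obtain ⟨W, hW, rfl | rfl⟩ := hV
      · exact ⟨n + 1, Or.inr ⟨n, W, rfl, hW, Or.inr (Or.inr (T_T _))⟩⟩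
      · refine ⟨n + 1, Or.inr ⟨n, _, rfl, hW.X_mul, Or.inr (Or.inl ?_)⟩⟩
        rw [T_T, S_S_H]
  · exact ⟨n + 2, Or.inr ⟨n + 1, _, rfl, ⟨V, hV, Or.inl rfl⟩, Or.inl rfl⟩⟩
  · exact ⟨n + 2, Or.inr ⟨n + 1, _, rfl, ⟨V, hV, Or.inr rfl⟩, Or.inl rfl⟩⟩

lemma MemJ1.exists_MA {U : Mat2} (h : MemJ1 U) : ∃ m, MA m U := by
  obtain ⟨L, hL, rfl⟩ := h
  induction L with
  | nil => exact ⟨0, Or.inl ⟨rfl, 1, 1, by simp, .one, by simp⟩⟩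
  | cons A L ih =>
    obtain ⟨m, hm⟩ := ih fun B hB => hL B (List.mem_cons_of_mem _ hB)
    rw [List.prod_cons]
    rcases hL A List.mem_cons_self with rfl | rfl
    · exact ⟨m, hm.H_mul⟩
    · exact hm.T_mul

/-! ### Clifford + T words -/

/-- The matrices `C_m T C_{m-1} ⋯ T C₀`, in the shape used by `Tcount`. -/
def IsWord (m : ℕ) (V : Mat2) : Prop :=
  ∃ C : Fin (m + 1) → Mat2, (∀ i, IsClifford1 (C i)) ∧
    V = ((List.ofFn fun i : Fin m => C i.succ * Tgate).reverse).prod * C 0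

lemma isWord_zero {V : Mat2} : IsWord 0 V ↔ IsClifford1 V := by
  constructor
  · rintro ⟨C, hC, rfl⟩; simpa using hC 0
  · intro h; exact ⟨fun _ => V, fun _ => h, by simp⟩

lemma isWord_succ {m : ℕ} {V : Mat2} : IsWord (m + 1) V ↔
    ∃ D W, IsClifford1 D ∧ IsWord m W ∧ V = D * (Tgate * W) := by
  constructor
  · rintro ⟨C, hC, rfl⟩
    refine ⟨C (Fin.last _), _, hC _, ⟨fun i => C i.castSucc, fun i => hC _, rfl⟩, ?_⟩
    rw [List.ofFn_succ']
    simp [Matrix.mul_assoc, List.concat_eq_append]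
  · rintro ⟨D, W, hD, ⟨C, hC, rfl⟩, rfl⟩
    refine ⟨Fin.snoc (α := fun _ => Mat2) C D, ?_, ?_⟩
    · intro i
      refine Fin.lastCases ?_ (fun j => ?_) i
      · simpa using hD
      · simpa using hC j
    · rw [List.ofFn_succ']
      have h0 : (Fin.snoc (α := fun _ => Mat2) C D : Fin (m + 2) → Mat2) 0 = C 0 :=
        Fin.snoc_castSucc (α := fun _ => Mat2) D C 0
      have h1 : ∀ i : Fin m,
          (Fin.snoc (α := fun _ => Mat2) C D : Fin (m + 2) → Mat2) i.castSucc.succ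
            = C i.succ := by
        intro i
        rw [← Fin.castSucc_succ]
        exact Fin.snoc_castSucc (α := fun _ => Mat2) D C i.succ
      simp [Matrix.mul_assoc, List.concat_eq_append, h0, h1]

lemma IsWord.H_mul {m : ℕ} {V : Mat2} (h : IsWord m V) : IsWord m (Hgate * V) := by
  cases m with
  | zero => rw [isWord_zero] at h ⊢; exact h.H_mul
  | succ m =>
    rw [isWord_succ] at h ⊢
    obtain ⟨D, W, hD, hW, rfl⟩ := h
    exact ⟨_, W, hD.H_mul, hW, by rw [Matrix.mul_assoc]⟩

lemma IsWord.S_mul {m : ℕ} {V : Mat2} (h : IsWord m V) : IsWord m (Sgate * V) := by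
  cases m with
  | zero => rw [isWord_zero] at h ⊢; exact h.S_mul
  | succ m =>
    rw [isWord_succ] at h ⊢
    obtain ⟨D, W, hD, hW, rfl⟩ := h
    exact ⟨_, W, hD.S_mul, hW, by rw [Matrix.mul_assoc]⟩

lemma IsWord.T_mul {m : ℕ} {V : Mat2} (h : IsWord m V) : IsWord (m + 1) (Tgate * V) :=
  isWord_succ.2 ⟨1, V, .one, h, by simp⟩

lemma NF.isWord {n : ℕ} {U : Mat2} (h : NF n U) :
    ∃ (c : ℂ) (V : Mat2), ‖c‖ = 1 ∧ IsWord (n + 1) V ∧ U = c • V := by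
  induction n generalizing U with
  | zero =>
    obtain ⟨c, C, hc, hC, rfl⟩ := h
    exact ⟨c, _, hc, (isWord_zero.2 hC).T_mul, rfl⟩
  | succ n ih =>
    obtain ⟨V, hV, h⟩ := h
    obtain ⟨c, W, hc, hW, rfl⟩ := ih hV
    rcases h with rfl | rfl
    · exact ⟨c, _, hc, hW.H_mul.T_mul, by simp⟩
    · exact ⟨c, _, hc, hW.H_mul.S_mul.T_mul, by simp⟩

lemma MA.isWord {m : ℕ} {U : Mat2} (h : MA m U) :
    ∃ (c : ℂ) (V : Mat2), ‖c‖ = 1 ∧ IsWord m V ∧ U = c • V := by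
  rcases h with ⟨rfl, c, C, hc, hC, rfl⟩ | ⟨n, V, rfl, hV, h⟩
  · exact ⟨c, C, hc, isWord_zero.2 hC, rfl⟩
  · obtain ⟨c, W, hc, hW, rfl⟩ := hV.isWord
    rcases h with rfl | rfl | rfl
    · exact ⟨c, _, hc, hW, rfl⟩
    · exact ⟨c, _, hc, hW.H_mul, by simp⟩
    · exact ⟨c, _, hc, hW.H_mul.S_mul, by simp⟩

lemma Tcount_eq_sInf_isWord (U : Mat2) :
    Tcount U = sInf {m : ℕ | ∃ (c : ℂ) (V : Mat2), ‖c‖ = 1 ∧ IsWord m V ∧ U = c • V} := by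
  unfold Tcount
  congr 1
  ext m
  constructor
  · rintro ⟨φ, C, hC, h⟩
    refine ⟨Complex.exp (-(Complex.I * φ)), _, ?_, ⟨C, hC, rfl⟩, ?_⟩
    · rw [Complex.norm_exp]; simp
    · rw [← h, smul_smul, ← Complex.exp_add]; simp
  · rintro ⟨c, V, hc, ⟨C, hC, rfl⟩, rfl⟩
    refine ⟨-c.arg, C, hC, ?_⟩
    have hc' : c = Complex.exp (c.arg * Complex.I) := by
      have := Complex.norm_mul_exp_arg_mul_I c
      rw [hc] at this
      simpa using this.symm
    rw [smul_smul]
    nth_rewrite 2 [hc']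
    rw [← Complex.exp_add]
    have : Complex.I * ((-c.arg : ℝ) : ℂ) + c.arg * Complex.I = 0 := by push_cast; ring
    rw [this]; simp

/-! ### The channel representation -/

lemma chan1_smul {c : ℂ} (hc : ‖c‖ = 1) (U : Mat2) : chan1 (c • U) = chan1 U := by
  have h : c * star c = 1 := by
    have := Complex.mul_conj c
    rw [Complex.normSq_eq_norm_sq, hc] at this
    simpa using this
  ext r s
  unfold chan1
  have : pauli1 r * (c • U) * pauli1 s * (c • U)ᴴ
      = (c * star c) • (pauli1 r * U * pauli1 s * Uᴴ) := by
    simp [smul_smul, mul_comm]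
  rw [this, h, one_smul]

/-- Left multiplication by `A` acts on the rows of the channel representation through the
coordinates of the conjugated Paulis `A† P_r A`. -/
lemma chan1_mul (A U : Mat2) (r s : Fin 4) (c : Fin 4 → ℝ)
    (h : Aᴴ * pauli1 r * A = ∑ t, (c t : ℂ) • pauli1 t) :
    chan1 (A * U) r s = ∑ t, c t * chan1 U t s := by
  unfold chan1
  have h1 : (pauli1 r * (A * U) * pauli1 s * (A * U)ᴴ).trace
      = ((Aᴴ * pauli1 r * A) * (U * pauli1 s * Uᴴ)).trace := by
    rw [Matrix.conjTranspose_mul, ← Matrix.mul_assoc, Matrix.trace_mul_comm]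
    simp only [Matrix.mul_assoc]
  rw [h1, h, Finset.sum_mul, Matrix.trace_sum, Finset.mul_sum, Complex.re_sum]
  refine Finset.sum_congr rfl fun t _ => ?_
  rw [Matrix.smul_mul, Matrix.trace_smul, smul_eq_mul, mul_left_comm, Complex.re_ofReal_mul]
  simp only [Matrix.mul_assoc]

section Rows
variable (U : Mat2) (s : Fin 4)

lemma chan1_H : chan1 (Hgate * U) 0 s = chan1 U 0 s ∧ chan1 (Hgate * U) 1 s = chan1 U 3 s ∧
    chan1 (Hgate * U) 2 s = -chan1 U 2 s ∧ chan1 (Hgate * U) 3 s = chan1 U 1 s := by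
  have e : hh ^ 2 = 1 / 2 := by rw [pow_two, hh_sq]
  refine ⟨?_, ?_, ?_, ?_⟩
  · rw [chan1_mul Hgate U 0 s ![1, 0, 0, 0]]
    · simp [Fin.sum_univ_four]
    · rw [Hgate_eq]
      ext i j; fin_cases i <;> fin_cases j <;>
        simp [Fin.sum_univ_four, pauli1, Matrix.mul_apply, star_hh] <;> linear_combination 2 * e
  · rw [chan1_mul Hgate U 1 s ![0, 0, 0, 1]]
    · simp [Fin.sum_univ_four]
    · rw [Hgate_eq]
      ext i j; fin_cases i <;> fin_cases j <;>
        simp [Fin.sum_univ_four, pauli1, Matrix.mul_apply, star_hh] <;>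
        first | linear_combination 2 * e | linear_combination -2 * e
  · rw [chan1_mul Hgate U 2 s ![0, 0, -1, 0]]
    · simp [Fin.sum_univ_four]
    · rw [Hgate_eq]
      ext i j; fin_cases i <;> fin_cases j <;>
        simp [Fin.sum_univ_four, pauli1, Matrix.mul_apply, star_hh] <;>
        first
          | linear_combination 2 * Complex.I * e
          | linear_combination -2 * Complex.I * e
  · rw [chan1_mul Hgate U 3 s ![0, 1, 0, 0]]
    · simp [Fin.sum_univ_four]
    · rw [Hgate_eq]
      ext i j; fin_cases i <;> fin_cases j <;>
        simp [Fin.sum_univ_four, pauli1, Matrix.mul_apply, star_hh] <;>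
        linear_combination 2 * e

lemma chan1_T : chan1 (Tgate * U) 0 s = chan1 U 0 s ∧
    chan1 (Tgate * U) 1 s = (chan1 U 1 s - chan1 U 2 s) / Real.sqrt 2 ∧
    chan1 (Tgate * U) 2 s = (chan1 U 1 s + chan1 U 2 s) / Real.sqrt 2 ∧
    chan1 (Tgate * U) 3 s = chan1 U 3 s := by
  have e : hh ^ 2 = 1 / 2 := by rw [pow_two, hh_sq]
  have hr : (((Real.sqrt 2)⁻¹ : ℝ) : ℂ) = hh := by unfold hh; push_cast; rfl
  have n : hh * (1 - Complex.I) * (hh * (1 + Complex.I)) = 1 := by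
    linear_combination (1 - Complex.I ^ 2) * e - (1 / 2) * Complex.I_sq
  have so := star_omega8
  refine ⟨?_, ?_, ?_, ?_⟩
  · rw [chan1_mul Tgate U 0 s ![1, 0, 0, 0]]
    · simp [Fin.sum_univ_four]
    · rw [Tgate_eq]
      ext i j; fin_cases i <;> fin_cases j <;>
        simp [Fin.sum_univ_four, pauli1, Matrix.mul_apply, so]
      rw [omega8_eq, n]
  · rw [chan1_mul Tgate U 1 s ![0, (Real.sqrt 2)⁻¹, -(Real.sqrt 2)⁻¹, 0]]
    · simp [Fin.sum_univ_four]; ring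
    · rw [Tgate_eq]
      ext i j; fin_cases i <;> fin_cases j <;>
        simp [Fin.sum_univ_four, pauli1, Matrix.mul_apply, star_hh, omega8_eq, -Complex.ofReal_inv, hr] <;>
        ring
  · rw [chan1_mul Tgate U 2 s ![0, (Real.sqrt 2)⁻¹, (Real.sqrt 2)⁻¹, 0]]
    · simp [Fin.sum_univ_four]; ring
    · rw [Tgate_eq]
      ext i j; fin_cases i <;> fin_cases j <;>
        simp [Fin.sum_univ_four, pauli1, Matrix.mul_apply, star_hh, omega8_eq, -Complex.ofReal_inv, hr]
      · linear_combination (-hh) * Complex.I_sq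
      · linear_combination (-hh) * Complex.I_sq
  · rw [chan1_mul Tgate U 3 s ![0, 0, 0, 1]]
    · simp [Fin.sum_univ_four]
    · rw [Tgate_eq]
      ext i j; fin_cases i <;> fin_cases j <;>
        simp [Fin.sum_univ_four, pauli1, Matrix.mul_apply, so]
      rw [omega8_eq, n]

lemma chan1_S : chan1 (Sgate * U) 0 s = chan1 U 0 s ∧ chan1 (Sgate * U) 1 s = -chan1 U 2 s ∧
    chan1 (Sgate * U) 2 s = chan1 U 1 s ∧ chan1 (Sgate * U) 3 s = chan1 U 3 s := by
  have h2 : Real.sqrt 2 * Real.sqrt 2 = 2 := Real.mul_self_sqrt (by norm_num)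
  have hne : Real.sqrt 2 ≠ 0 := by positivity
  obtain ⟨a0, a1, a2, a3⟩ := chan1_T (Tgate * U) s
  obtain ⟨b0, b1, b2, b3⟩ := chan1_T U s
  rw [← T_T, a0, a1, a2, a3, b0, b1, b2, b3]
  refine ⟨rfl, ?_, ?_, rfl⟩
  · rw [← sub_div, div_div, h2]; ring
  · rw [← add_div, div_div, h2]; ring

end Rows

lemma chan1_one_apply (r s : Fin 4) : chan1 1 r s = if r = s then 1 else 0 := by
  fin_cases r <;> fin_cases s <;> simp [chan1, pauli1, Matrix.trace_fin_two] <;> norm_num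

/-! ### Denominator exponents -/

/-- `a + b√2` are numerators of the channel representation of `U` over `√2 ^ k`. -/
def IsNum (k : ℕ) (U : Mat2) (a b : Fin 4 → Fin 4 → ℤ) : Prop :=
  ∀ r s, chan1 U r s = (a r s + b r s * Real.sqrt 2) / Real.sqrt 2 ^ k

lemma IsNum.H_mul {k : ℕ} {U : Mat2} {a b : Fin 4 → Fin 4 → ℤ} (h : IsNum k U a b) :
    IsNum k (Hgate * U) ![a 0, a 3, -a 2, a 1] ![b 0, b 3, -b 2, b 1] := by
  intro r s
  obtain ⟨h0, h1, h2, h3⟩ := chan1_H U s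
  fin_cases r <;> simp [h0, h1, h2, h3, h _ s]
  ring

lemma IsNum.S_mul {k : ℕ} {U : Mat2} {a b : Fin 4 → Fin 4 → ℤ} (h : IsNum k U a b) :
    IsNum k (Sgate * U) ![a 0, -a 2, a 1, a 3] ![b 0, -b 2, b 1, b 3] := by
  intro r s
  obtain ⟨h0, h1, h2, h3⟩ := chan1_S U s
  fin_cases r <;> simp [h0, h1, h2, h3, h _ s]
  ring

lemma IsNum.T_mul {k : ℕ} {U : Mat2} {a b : Fin 4 → Fin 4 → ℤ} (h : IsNum k U a b) :
    IsNum (k + 1) (Tgate * U) ![2 * b 0, a 1 - a 2, a 1 + a 2, 2 * b 3]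
      ![a 0, b 1 - b 2, b 1 + b 2, a 3] := by
  intro r s
  have hq : Real.sqrt 2 * Real.sqrt 2 = 2 := Real.mul_self_sqrt (by norm_num)
  have hne : Real.sqrt 2 ≠ 0 := by positivity
  obtain ⟨h0, h1, h2, h3⟩ := chan1_T U s
  have key : ∀ x y : ℝ, (x + y * Real.sqrt 2) / Real.sqrt 2 ^ k
      = (2 * y + x * Real.sqrt 2) / Real.sqrt 2 ^ (k + 1) := by
    intro x y
    rw [pow_succ, div_eq_div_iff (by positivity) (by positivity)]
    linear_combination (y * Real.sqrt 2 ^ k) * hq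
  fin_cases r
  · simpa [h0, h _ s] using key _ _
  · simp [h1, h _ s, pow_succ]; field_simp; ring
  · simp [h2, h _ s, pow_succ]; field_simp; ring
  · simpa [h3, h _ s] using key _ _

lemma IsNum.smul {k : ℕ} {U : Mat2} {a b : Fin 4 → Fin 4 → ℤ} (h : IsNum k U a b) {c : ℂ}
    (hc : ‖c‖ = 1) : IsNum k (c • U) a b := by
  unfold IsNum; rwa [chan1_smul hc]

lemma isNum_one : IsNum 0 1 (fun r s => if r = s then 1 else 0) 0 := by
  intro r s
  rw [chan1_one_apply]
  simp

lemma sdeMat_le {k : ℕ} {U : Mat2} {a b : Fin 4 → Fin 4 → ℤ} (h : IsNum k U a b) :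
    sdeMat (chan1 U) ≤ k :=
  Finset.sup_le fun p _ => Nat.sInf_le ⟨_, _, h p.1 p.2⟩

/-- A reduced fraction: in `ℤ[√2]`, the number `a + b√2` is divisible by `√2` only when `a` is
even. -/
lemma le_sde {k : ℕ} {a b : ℤ} (ha : ¬ 2 ∣ a) :
    k ≤ sde ((a + b * Real.sqrt 2) / Real.sqrt 2 ^ k) := by
  unfold sde
  -- membership of `k` itself excludes the junk value `sInf ∅ = 0`
  refine le_csInf ⟨k, a, b, rfl⟩ ?_
  rintro j ⟨c, d, h⟩
  by_contra! hlt
  obtain ⟨n, rfl⟩ : ∃ n, k = j + (n + 1) := ⟨k - j - 1, by omega⟩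
  have hq : Real.sqrt 2 * Real.sqrt 2 = 2 := Real.mul_self_sqrt (by norm_num)
  have hdiv : ∀ n : ℕ, ∃ e f : ℤ,
      (c + d * Real.sqrt 2) * Real.sqrt 2 ^ (n + 1) = 2 * e + f * Real.sqrt 2 := by
    intro n
    induction n with
    | zero => exact ⟨d, c, by linear_combination (d : ℝ) * hq⟩
    | succ n ih =>
      obtain ⟨e, f, h⟩ := ih
      refine ⟨f, 2 * e, ?_⟩
      rw [pow_succ, ← mul_assoc, h]
      push_cast
      linear_combination (f : ℝ) * hq
  obtain ⟨e, f, hef⟩ := hdiv n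
  rw [div_eq_div_iff (by positivity) (by positivity), pow_add] at h
  have hne : Real.sqrt 2 ^ j ≠ 0 := by positivity
  have h' : (a : ℝ) + b * Real.sqrt 2 = 2 * e + f * Real.sqrt 2 := by
    rw [← hef]
    apply mul_right_cancel₀ hne
    rw [h]; ring
  have hbf : b = f := by
    by_contra hbf
    have hbf' : ((f - b : ℤ) : ℝ) ≠ 0 := by
      exact_mod_cast fun h0 => hbf (by omega)
    apply irrational_sqrt_two
    refine ⟨((a - 2 * e : ℤ) : ℚ) / ((f - b : ℤ) : ℚ), ?_⟩
    rw [Rat.cast_div, Rat.cast_intCast, Rat.cast_intCast, div_eq_iff hbf']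
    push_cast
    linear_combination h'
  subst hbf
  have : (a : ℝ) = ((2 * e : ℤ) : ℝ) := by push_cast; linear_combination h'
  exact ha ⟨e, by exact_mod_cast this⟩

lemma sdeMat_eq {k : ℕ} {U : Mat2} {a b : Fin 4 → Fin 4 → ℤ} (h : IsNum k U a b)
    {r s : Fin 4} (ha : ¬ 2 ∣ a r s) : sdeMat (chan1 U) = k := by
  refine le_antisymm (sdeMat_le h) ?_
  have h1 : k ≤ sde (chan1 U r s) := by rw [h r s]; exact le_sde ha
  refine h1.trans ?_
  generalize chan1 U = M
  exact Finset.le_sup (f := fun p : Fin 4 × Fin 4 => sde (M p.1 p.2)) (Finset.mem_univ (r, s))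

/-- Upper bound on the denominators of any Clifford + T word. -/
lemma IsWord.exists_isNum {m : ℕ} {V : Mat2} (h : IsWord m V) : ∃ a b, IsNum m V a b := by
  have key : ∀ {k : ℕ} {C W : Mat2}, IsClifford1 C → (∃ a b, IsNum k W a b) →
      ∃ a b, IsNum k (C * W) a b := fun hC hW =>
    hC.mul_induction (P := fun V => ∃ a b, IsNum _ V a b)
      (fun _ ⟨_, _, h⟩ => ⟨_, _, h.H_mul⟩) (fun _ ⟨_, _, h⟩ => ⟨_, _, h.S_mul⟩) hW
  induction m generalizing V with
  | zero =>
    have := key (isWord_zero.1 h) ⟨_, _, isNum_one⟩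
    rwa [Matrix.mul_one] at this
  | succ m ih =>
    obtain ⟨D, W, hD, hW, rfl⟩ := isWord_succ.1 h
    obtain ⟨a, b, hab⟩ := ih hW
    exact key hD ⟨_, _, hab.T_mul⟩

/-- The channel representation of a Clifford has integer entries, and its three Pauli rows are
pairwise distinct modulo `2`. The last conjunct says that the identity row is nonzero
modulo `2`. -/
lemma IsClifford1.exists_isNum {C : Mat2} (h : IsClifford1 C) : ∃ a b, IsNum 0 C a b ∧
    (∃ s, ¬ 2 ∣ a 1 s - a 2 s) ∧ (∃ s, ¬ 2 ∣ a 1 s - a 3 s) ∧ (∃ s, ¬ 2 ∣ a 2 s - a 3 s) ∧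
    ∃ s, ¬ 2 ∣ a 0 s := by
  have := h.mul_induction (U := 1) (P := fun C => ∃ a b, IsNum 0 C a b ∧
    (∃ s, ¬ 2 ∣ a 1 s - a 2 s) ∧ (∃ s, ¬ 2 ∣ a 1 s - a 3 s) ∧ (∃ s, ¬ 2 ∣ a 2 s - a 3 s) ∧
    ∃ s, ¬ 2 ∣ a 0 s) ?_ ?_ ?_
  · rwa [Matrix.mul_one] at this
  · rintro V ⟨a, b, hab, ⟨i, hi⟩, ⟨j, hj⟩, ⟨l, hl⟩, o, ho⟩
    refine ⟨_, _, hab.H_mul, ⟨l, ?_⟩, ⟨j, ?_⟩, ⟨i, ?_⟩, o, ?_⟩ <;> simp <;> omega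
  · rintro V ⟨a, b, hab, ⟨i, hi⟩, ⟨j, hj⟩, ⟨l, hl⟩, o, ho⟩
    refine ⟨_, _, hab.S_mul, ⟨i, ?_⟩, ⟨l, ?_⟩, ⟨j, ?_⟩, o, ?_⟩ <;> simp <;> omega
  · exact ⟨_, _, isNum_one, ⟨1, by decide⟩, ⟨1, by decide⟩, ⟨2, by decide⟩, 0, by decide⟩

/-- The parity pattern of a normal form starting with `T`: modulo `√2`, the numerators have equal
nonzero rows `X` and `Y`, and zero row `Z`. Each syllable `HT` or `SHT` moves the zero row away
from `Z`, so that the next `T` does not cancel a factor `√2`. -/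
lemma NF.exists_isNum {n : ℕ} {U : Mat2} (h : NF n U) : ∃ a b, IsNum (n + 1) U a b ∧
    (∀ s, 2 ∣ a 1 s - a 2 s) ∧ (∀ s, 2 ∣ a 3 s) ∧ ∃ s, ¬ 2 ∣ a 1 s := by
  induction n generalizing U with
  | zero =>
    obtain ⟨c, C, hc, hC, rfl⟩ := h
    obtain ⟨a, b, hab, ⟨i, hi⟩, -⟩ := hC.exists_isNum
    refine ⟨_, _, hab.T_mul.smul hc, fun s => ?_, fun s => ?_, i, ?_⟩ <;> simp <;> omega
  | succ n ih =>
    obtain ⟨V, hV, h⟩ := h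
    obtain ⟨a, b, hab, h12, h3, i, hi⟩ := ih hV
    rcases h with rfl | rfl
    · refine ⟨_, _, hab.H_mul.T_mul, fun s => ?_, fun s => ?_, i, ?_⟩
      · simp; omega
      · simp
      · have := h12 i; have := h3 i; simp; omega
    · refine ⟨_, _, hab.H_mul.S_mul.T_mul, fun s => ?_, fun s => ?_, i, ?_⟩
      · simp; omega
      · simp
      · have := h12 i; have := h3 i; simp; omega

lemma MA.sdeMat_eq {m : ℕ} {U : Mat2} (h : MA m U) : sdeMat (chan1 U) = m := by
  rcases h with ⟨rfl, c, C, hc, hC, rfl⟩ | ⟨n, V, rfl, hV, h⟩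
  · obtain ⟨a, b, hab, -, -, -, i, hi⟩ := hC.exists_isNum
    exact _root_.sdeMat_eq (hab.smul hc) hi
  · obtain ⟨a, b, hab, h12, h3, i, hi⟩ := hV.exists_isNum
    rcases h with rfl | rfl | rfl
    · exact _root_.sdeMat_eq hab hi
    · exact _root_.sdeMat_eq hab.H_mul (r := 3) (s := i) (by simpa using hi)
    · exact _root_.sdeMat_eq hab.H_mul.S_mul (r := 3) (s := i) (by simpa using hi)

lemma MA.Tcount_eq {m : ℕ} {U : Mat2} (h : MA m U) : Tcount U = m := by
  rw [Tcount_eq_sInf_isWord]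
  refine le_antisymm (Nat.sInf_le h.isWord) (le_csInf ⟨m, h.isWord⟩ ?_)
  rintro j ⟨c, V, hc, hV, rfl⟩
  obtain ⟨a, b, hab⟩ := hV.exists_isNum
  rw [← h.sdeMat_eq]
  exact sdeMat_le (hab.smul hc)

theorem Tcount_eq_sde_chan :
    (∀ U : Matrix (Fin 2) (Fin 2) ℂ, MemJ1 U → Tcount U = sdeMat (chan1 U)) ∧
    Tcount Tgate = 1 ∧ sdeMat (chan1 Tgate) = 1 := by
  have hT : MA 1 Tgate :=
    Or.inr ⟨0, Tgate, rfl, ⟨1, 1, by simp, .one, by simp⟩, Or.inl rfl⟩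
  refine ⟨fun U hU => ?_, hT.Tcount_eq, hT.sdeMat_eq⟩
  obtain ⟨m, hm⟩ := hU.exists_MA
  rw [hm.Tcount_eq, hm.sdeMat_eq]
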